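/- Let θ : EuclideanSpace ℝ (Fin 3) → ℝ be twice continuously differentiable and let W : EuclideanSpace ℝ (Fin 3) → EuclideanSpace ℝ (Fin 3) be continuously differentiable, with Δθ(x) = (div W)(x) for all x. Suppose there exist constants μ ∈ ℝ, C > 0 and R₀ > 0 such that for all ‖x‖ ≥ R₀: |θ(x) − μ/‖x‖| ≤ C/‖x‖², ‖∇θ(x) + μ·x/‖x‖³‖ ≤ C/‖x‖³, and ‖W(x)‖ ≤ C/‖x‖³. Then μ = 0. -/

import Mathlib

open scoped BigOperators

/-- The Euclidean Laplacian on `ℝ³`: the sum of the second partial derivatives in the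
directions of the standard orthonormal basis. -/
noncomputable def lap (g : EuclideanSpace ℝ (Fin 3) → ℝ) (x : EuclideanSpace ℝ (Fin 3)) : ℝ :=
  ∑ i : Fin 3,
    fderiv ℝ (fun y => fderiv ℝ g y (EuclideanSpace.single i 1)) x (EuclideanSpace.single i 1)

/-- The divergence of a vector field on `ℝ³`: `div W = Σ_i ∂W_i/∂x_i`. -/
noncomputable def divergence (W : EuclideanSpace ℝ (Fin 3) → EuclideanSpace ℝ (Fin 3))
    (x : EuclideanSpace ℝ (Fin 3)) : ℝ :=
  ∑ i : Fin 3, fderiv ℝ (fun y => W y i) x (EuclideanSpace.single i 1)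

open MeasureTheory Filter Topology

abbrev E3 := EuclideanSpace ℝ (Fin 3)

lemma psi_deriv (s : ℝ) :
    HasDerivAt (fun s : ℝ => (max 0 (1 - s))^2 * (1 + 2*s)) (-6 * s * max 0 (1-s)) s := by
  have h1 : HasDerivAt (fun s : ℝ => (max 0 (1 - s))^2) (-2 * max 0 (1-s)) s := by
    rcases lt_trichotomy s 1 with h | h | h
    · have : (fun s : ℝ => (1 - s)^2) =ᶠ[𝓝 s] (fun s : ℝ => (max 0 (1 - s))^2) := by
        filter_upwards [gt_mem_nhds h] with t ht
        rw [max_eq_right (by linarith)]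
      refine HasDerivAt.congr_of_eventuallyEq ?_ this.symm
      rw [max_eq_right (by linarith)]
      have := ((hasDerivAt_id s).const_sub 1).fun_pow 2
      refine (this.congr_deriv ?_)
      simp
    · subst h
      rw [hasDerivAt_iff_isLittleO]
      simp only [sub_self, max_self, mul_zero, smul_zero, sub_zero, ne_eq, OfNat.ofNat_ne_zero,
        not_false_eq_true, zero_pow]
      have : (fun x : ℝ => (x-1)^2) =o[𝓝 1] (fun x => x - 1) := by
        have := Asymptotics.isLittleO_pow_sub_sub (1:ℝ) (m := 2) (by norm_num)
        simpa using this
      refine Asymptotics.IsBigO.trans_isLittleO (Asymptotics.IsBigO.of_bound 1 ?_) this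
      filter_upwards with x
      rw [Real.norm_of_nonneg (by positivity), Real.norm_of_nonneg (by positivity), one_mul]
      rcases le_total x 1 with hx | hx
      · rw [max_eq_right (by linarith)]; nlinarith
      · rw [max_eq_left (by linarith)]; nlinarith [sq_nonneg (x-1)]
    · have : (fun s : ℝ => (0:ℝ)) =ᶠ[𝓝 s] (fun s : ℝ => (max 0 (1 - s))^2) := by
        filter_upwards [lt_mem_nhds h] with t ht
        rw [max_eq_left (by linarith)]; simp
      refine HasDerivAt.congr_of_eventuallyEq ?_ this.symm
      rw [max_eq_left (by linarith)]
      simpa using hasDerivAt_const s (0:ℝ)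
  have h2 : HasDerivAt (fun s : ℝ => 1 + 2*s) 2 s := by
    simpa using ((hasDerivAt_id s).const_mul 2).const_add 1
  refine (h1.fun_mul h2).congr_deriv ?_
  rcases le_total s 1 with hx | hx
  · rw [max_eq_right (by linarith)]; ring
  · rw [max_eq_left (by linarith)]; ring

noncomputable def cut (x : E3) : ℝ := (max 0 (1 - ‖x‖^2))^2 * (1 + 2*‖x‖^2)

lemma cut_deriv (x : E3) :
    HasFDerivAt cut ((-6 * ‖x‖^2 * max 0 (1-‖x‖^2)) • (2 • (innerSL ℝ x))) x := by
  have := (psi_deriv (‖x‖^2)).comp_hasFDerivAt x (hasStrictFDerivAt_norm_sq x).hasFDerivAt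
  exact this

lemma cut_cs {f : ℝ → E3 → ℝ} (hf : ∀ x, f 0 x = 0) :
    HasCompactSupport (fun x : E3 => f (max 0 (1 - ‖x‖^2)) x) := by
  refine HasCompactSupport.intro (isCompact_closedBall (0:E3) 1) ?_
  intro x hx
  simp only [Metric.mem_closedBall, dist_zero_right, not_le] at hx
  have : max 0 (1 - ‖x‖^2) = 0 := max_eq_left (by nlinarith)
  simp [this, hf]

lemma cut_cont : Continuous cut := by unfold cut; fun_prop

lemma test_int (F : E3 → E3) (hF : ContDiff ℝ 1 F) (hdiv : ∀ x, divergence F x = 0) :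
    ∫ x : E3, ‖x‖^2 * max 0 (1-‖x‖^2) * inner ℝ (F x) x = 0 := by
  have hFi : ∀ i, ContDiff ℝ 1 (fun y => F y i) := fun i => by fun_prop
  have hfc : ∀ i, Continuous (fun x => F x i) := fun i => (hFi i).continuous
  have hdc : ∀ i, Continuous fun x => fderiv ℝ (fun y => F y i) x (EuclideanSpace.single i 1) :=
    fun i => ((hFi i).continuous_fderiv (by norm_num)).clm_apply continuous_const
  have hder : ∀ i x, fderiv ℝ cut x (EuclideanSpace.single i 1)
      = -12 * (‖x‖^2 * max 0 (1-‖x‖^2) * x i) := by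
    intro i x
    rw [(cut_deriv x).fderiv]
    simp [EuclideanSpace.inner_single_right]
    ring
  have i1 : ∀ i, Integrable (fun x : E3 => -12 * (‖x‖^2 * max 0 (1-‖x‖^2) * x i) * F x i) := by
    intro i
    refine Continuous.integrable_of_hasCompactSupport ?_
      (cut_cs (f := fun m x => -12 * (‖x‖^2 * m * x i) * F x i) (by simp))
    have := hfc i
    fun_prop
  have i2 : ∀ i, Integrable (fun x : E3 => cut x *
      fderiv ℝ (fun y => F y i) x (EuclideanSpace.single i 1)) := by
    intro i
    exact Continuous.integrable_of_hasCompactSupport (cut_cont.mul (hdc i))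
      (cut_cs (f := fun m x => m^2 * (1 + 2*‖x‖^2) *
        fderiv ℝ (fun y => F y i) x (EuclideanSpace.single i 1)) (by simp))
  have i3 : ∀ i, Integrable (fun x : E3 => cut x * F x i) := by
    intro i
    exact Continuous.integrable_of_hasCompactSupport (cut_cont.mul (hfc i))
      (cut_cs (f := fun m x => m^2 * (1 + 2*‖x‖^2) * F x i) (by simp))
  have key : ∀ i, ∫ x : E3, cut x * fderiv ℝ (fun y => F y i) x (EuclideanSpace.single i 1)
      = - ∫ x : E3, -12 * (‖x‖^2 * max 0 (1-‖x‖^2) * x i) * F x i := by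
    intro i
    have := integral_mul_fderiv_eq_neg_fderiv_mul_of_integrable (μ := (volume : Measure E3))
      (f := cut) (g := fun y => F y i) (v := EuclideanSpace.single i 1)
      (by simpa only [hder] using i1 i) (i2 i) (i3 i)
      (fun x _ => (cut_deriv x).differentiableAt) (fun x _ => ((hFi i).differentiable (by norm_num)) x)
    simpa only [hder] using this
  have s1 : ∑ i, ∫ x : E3, cut x * fderiv ℝ (fun y => F y i) x (EuclideanSpace.single i 1) = 0 := by
    rw [← integral_finsetSum _ (fun i _ => i2 i)]
    simp_rw [← Finset.mul_sum]
    have : ∀ x, ∑ i, fderiv ℝ (fun y => F y i) x (EuclideanSpace.single i 1) = 0 := hdiv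
    simp [this]
  simp_rw [key] at s1
  rw [Finset.sum_neg_distrib, ← integral_finsetSum _ (fun i _ => i1 i)] at s1
  have e : ∀ x : E3, ∑ i, -12 * (‖x‖^2 * max 0 (1-‖x‖^2) * x i) * F x i
     = -12 * (‖x‖^2 * max 0 (1-‖x‖^2) * inner ℝ (F x) x) := by
    intro x
    simp only [PiLp.inner_apply, Finset.mul_sum]
    refine Finset.sum_congr rfl fun i _ => ?_
    simp; ring
  simp_rw [e] at s1
  rw [integral_const_mul] at s1
  linarith

lemma div_scale (F : E3 → E3) (c d : ℝ) (x : E3) :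
    divergence (fun y => d • F (c • y)) x = d * c * divergence F (c • x) := by
  unfold divergence
  rw [Finset.mul_sum]
  refine Finset.sum_congr rfl fun i _ => ?_
  have := fderiv_comp_smul (𝕜 := ℝ) (f := fun y => d * F y i) c (x := x)
  have h2 : fderiv ℝ (fun y => d * F y i) (c • x) = d • fderiv ℝ (fun y => F y i) (c • x) := by
    exact congrFun (fderiv_const_smul_field (𝕜 := ℝ) (f := fun y => F y i) d) (c • x)
  simp only [PiLp.smul_apply, smul_eq_mul]
  rw [this, h2]
  simp; ring

lemma main_lim (F : E3 → E3) (hF : ContDiff ℝ 1 F) (hdiv : ∀ x, divergence F x = 0)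
    (μ C R₀ : ℝ) (hC : 0 < C) (hR₀ : 0 < R₀)
    (h : ∀ x, R₀ ≤ ‖x‖ → ‖F x + (μ / ‖x‖ ^ 3) • x‖ ≤ C / ‖x‖ ^ 3) : μ = 0 := by
  -- global bound
  obtain ⟨M, hM⟩ : ∃ M, ∀ x, ‖x‖^2 * ‖F x‖ ≤ M := by
    obtain ⟨M1, h1⟩ := (isCompact_closedBall (0:E3) R₀).exists_bound_of_continuousOn
      (f := fun x => ‖x‖^2 * ‖F x‖) (by have := hF.continuous; fun_prop)
    refine ⟨max M1 (C / R₀ + |μ|), fun x => ?_⟩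
    rcases le_total ‖x‖ R₀ with hx | hx
    · refine le_trans ?_ (le_max_left _ _)
      exact (le_abs_self _).trans (h1 x (by simpa using hx))
    · refine le_trans ?_ (le_max_right _ _)
      have hp : 0 < ‖x‖ := hR₀.trans_le hx
      have : ‖F x‖ ≤ C / ‖x‖^3 + |μ| / ‖x‖^2 := by
        calc ‖F x‖ = ‖(F x + (μ / ‖x‖ ^ 3) • x) - (μ / ‖x‖ ^ 3) • x‖ := by simp
          _ ≤ _ := norm_sub_le _ _
          _ ≤ C / ‖x‖^3 + |μ| / ‖x‖^2 := by
            refine add_le_add (h x hx) (le_of_eq ?_)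
            rw [norm_smul, norm_div, norm_pow, norm_norm, Real.norm_eq_abs]
            field_simp
      calc ‖x‖^2 * ‖F x‖ ≤ ‖x‖^2 * (C / ‖x‖^3 + |μ| / ‖x‖^2) := by gcongr
        _ = C / ‖x‖ + |μ| := by field_simp
        _ ≤ _ := by gcongr
  let k : E3 → ℝ := fun x => ‖x‖^2 * max 0 (1-‖x‖^2)
  let w : E3 → ℝ := fun x => ‖x‖ * max 0 (1-‖x‖^2)
  have hw : Continuous w := by fun_prop
  have hwc : HasCompactSupport w := cut_cs (f := fun m x => ‖x‖ * m) (by simp)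
  have hw0 : ∀ x, 0 ≤ w x := fun x => by positivity
  have hkw : ∀ x, k x = ‖x‖ * w x := fun x => by simp only [k, w]; ring
  have hz : ∀ n : ℕ, ∫ x : E3, k x * inner ℝ (((n:ℝ)^2) • F ((n:ℝ) • x)) x = 0 := fun n =>
    test_int (fun x => ((n:ℝ)^2) • F ((n:ℝ) • x)) (by fun_prop)
      (fun x => by rw [div_scale, hdiv, mul_zero])
  have hlim : Tendsto (fun n : ℕ => ∫ x : E3, k x * inner ℝ (((n:ℝ)^2) • F ((n:ℝ) • x)) x) atTop
      (𝓝 (∫ x, (-μ) * w x)) := by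
    refine tendsto_integral_of_dominated_convergence (fun x => M * w x) ?_ ?_ ?_ ?_
    · intro n
      have := hF.continuous
      exact Continuous.aestronglyMeasurable (by fun_prop)
    · exact (hw.integrable_of_hasCompactSupport hwc).const_mul M
    · intro n
      refine Eventually.of_forall fun x => ?_
      rw [hkw]
      have h3 := abs_real_inner_le_norm (((n:ℝ)^2) • F ((n:ℝ) • x)) x
      have h4 := hM ((n:ℝ) • x)
      rw [norm_smul, norm_pow, Real.norm_natCast] at h3
      rw [norm_smul, Real.norm_natCast] at h4
      rw [norm_mul, norm_mul, norm_norm, Real.norm_of_nonneg (hw0 x), Real.norm_eq_abs]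
      calc ‖x‖ * w x * _ ≤ ‖x‖ * w x * ((n:ℝ)^2 * ‖F ((n:ℝ) • x)‖ * ‖x‖) := by
            have := hw0 x
            gcongr
        _ = ((n * ‖x‖)^2 * ‖F ((n:ℝ) • x)‖) * w x := by ring
        _ ≤ M * w x := mul_le_mul_of_nonneg_right h4 (hw0 x)
    · refine Eventually.of_forall fun x => ?_
      by_cases hx : x = 0
      · subst hx; simp [k, w]
      have hp : 0 < ‖x‖ := norm_pos_iff.2 hx
      rw [tendsto_iff_norm_sub_tendsto_zero]
      have hl : Tendsto (fun n : ℕ => w x * C / ‖x‖ * (1 / (n:ℝ))) atTop (𝓝 0) := by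
        simpa using tendsto_one_div_atTop_nhds_zero_nat.const_mul (w x * C / ‖x‖)
      refine squeeze_zero' (Eventually.of_forall fun _ => norm_nonneg _) ?_ hl
      obtain ⟨N, hN⟩ := exists_nat_ge (R₀ / ‖x‖)
      filter_upwards [eventually_ge_atTop N, eventually_gt_atTop 0] with n hn hn0
      have hn0' : (0:ℝ) < n := by exact_mod_cast hn0
      have hnR : R₀ ≤ ‖(n:ℝ) • x‖ := by
        rw [norm_smul, Real.norm_natCast, ← div_le_iff₀ hp]
        exact hN.trans (by exact_mod_cast hn)
      have hb := h _ hnR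
      rw [norm_smul, Real.norm_natCast] at hb
      set v := F ((n:ℝ) • x) + (μ / (n * ‖x‖) ^ 3) • (n:ℝ) • x with hv
      have hFv : F ((n:ℝ) • x) = v - (μ / (n * ‖x‖) ^ 3) • (n:ℝ) • x := by simp [hv]
      have e : k x * inner ℝ (((n:ℝ)^2) • F ((n:ℝ) • x)) x - (-μ) * w x
          = ‖x‖ * w x * (n:ℝ)^2 * inner ℝ v x := by
        rw [hkw, hFv]
        simp only [inner_smul_left, inner_sub_left, real_inner_self_eq_norm_sq]
        simp
        field_simp
        ring
      rw [e, norm_mul, Real.norm_of_nonneg (by have := hw0 x; positivity), Real.norm_eq_abs]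
      calc _ ≤ ‖x‖ * w x * (n:ℝ)^2 * (C / (n * ‖x‖)^3 * ‖x‖) := by
            have := hw0 x
            gcongr
            exact (abs_real_inner_le_norm _ _).trans (by gcongr)
        _ = _ := by field_simp
  simp_rw [hz] at hlim
  have h0 := tendsto_nhds_unique hlim tendsto_const_nhds
  rw [integral_const_mul] at h0
  have hpos : 0 < ∫ x, w x := by
    refine hw.integral_pos_of_hasCompactSupport_nonneg_nonzero hwc hw0
      (x := EuclideanSpace.single 0 (1/2)) ?_
    simp [w]
    norm_num
  rcases mul_eq_zero.1 h0 with h0 | h0 <;> linarith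

/-- Flat-space form of the stellar no-hair mechanism: if `Δθ = div W` with `W` decaying
as `1/‖x‖³`, and `θ` has a `μ/‖x‖` tail (with the stated decay of the errors), then the
scalar charge `μ` vanishes. -/
theorem scalar_charge_vanishes_for_divergence_source
    (θ : EuclideanSpace ℝ (Fin 3) → ℝ)
    (W : EuclideanSpace ℝ (Fin 3) → EuclideanSpace ℝ (Fin 3))
    (hθ : ContDiff ℝ 2 θ) (hW : ContDiff ℝ 1 W)
    (heq : ∀ x : EuclideanSpace ℝ (Fin 3), lap θ x = divergence W x)
    (μ C R₀ : ℝ) (hC : 0 < C) (hR₀ : 0 < R₀)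
    (hfar : ∀ x : EuclideanSpace ℝ (Fin 3), R₀ ≤ ‖x‖ →
      |θ x - μ / ‖x‖| ≤ C / ‖x‖ ^ 2)
    (hgrad : ∀ x : EuclideanSpace ℝ (Fin 3), R₀ ≤ ‖x‖ →
      ‖gradient θ x + (μ / ‖x‖ ^ 3) • x‖ ≤ C / ‖x‖ ^ 3)
    (hWdecay : ∀ x : EuclideanSpace ℝ (Fin 3), R₀ ≤ ‖x‖ → ‖W x‖ ≤ C / ‖x‖ ^ 3) :
    μ = 0 := by
  have hg1 : ContDiff ℝ 1 (gradient θ) := by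
    have h1 : ContDiff ℝ 1 (fderiv ℝ θ) := hθ.fderiv_right (by norm_num)
    exact (InnerProductSpace.toDual ℝ (EuclideanSpace ℝ (Fin 3))).symm.contDiff.comp h1
  have hgi : ∀ y i, gradient θ y i = fderiv ℝ θ y (EuclideanSpace.single i 1) := by
    intro y i
    have := InnerProductSpace.toDual_symm_apply (𝕜 := ℝ) (x := EuclideanSpace.single i (1:ℝ))
      (y := fderiv ℝ θ y)
    rw [← this, EuclideanSpace.inner_single_right]
    simp [gradient]
  refine main_lim (fun x => gradient θ x - W x) (hg1.sub hW) ?_ μ (2 * C) R₀ (by linarith) hR₀ ?_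
  · intro x
    have hx := heq x
    unfold lap divergence at hx
    unfold divergence
    rw [← sub_eq_zero, ← Finset.sum_sub_distrib] at hx
    rw [← hx]
    refine Finset.sum_congr rfl fun i _ => ?_
    have hc1 : ContDiff ℝ 1 (fun y => gradient θ y i) := by fun_prop
    have hc2 : ContDiff ℝ 1 (fun y => W y i) := by fun_prop
    have d1 : DifferentiableAt ℝ (fun y => gradient θ y i) x := hc1.differentiable (by norm_num) x
    have d2 : DifferentiableAt ℝ (fun y => W y i) x := hc2.differentiable (by norm_num) x
    simp_rw [← hgi]
    have := fderiv_fun_sub d1 d2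
    simp only [PiLp.sub_apply]
    rw [this]
    rfl
  · intro x hx
    have e : gradient θ x - W x + (μ / ‖x‖ ^ 3) • x
        = (gradient θ x + (μ / ‖x‖ ^ 3) • x) - W x := by abel
    rw [e]
    calc _ ≤ _ := norm_sub_le _ _
      _ ≤ C / ‖x‖ ^ 3 + C / ‖x‖ ^ 3 := add_le_add (hgrad x hx) (hWdecay x hx)
      _ = 2 * C / ‖x‖ ^ 3 := by ring
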